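/- For d ∈ ℕ divisible by 100 and t ∈ [1/(2√d), 1/2], let 𝒫_{d,t} be the class of discrete distributions (p_0, p_1, …, p_d) on the finite set {0,1,…,d} with p_i ≥ 0, Σ_{i=0}^d p_i = 1, and p_0 = t. There exist absolute constants c, C > 0 such that for all such d, t and all integers n ≥ 1: (i) if n ≥ C/t then ε*(𝒫_{d,t}, n, 1) ≤ 0.1; and (ii) if n ≤ c/t then ε*(𝒫_{d,t}, n, 1) ≥ 1/2. In particular an (n, n+1) sample amplification with error 0.1 is possible if and only if n = Θ(1/t). -/

import Mathlib

open MeasureTheory ProbabilityTheory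
open scoped ENNReal NNReal BigOperators

/-- Total variation distance between two measures: `sup_A |P(A) - Q(A)|`. -/
noncomputable def tvDist {X : Type*} [MeasurableSpace X] (μ ν : Measure X) : ℝ :=
  ⨆ A : {s : Set X // MeasurableSet s}, |(μ A).toReal - (ν A).toReal|

/-- Minimax sample amplification error `ε*(𝒫, n, m)` for the family `(P θ)_θ`. -/
noncomputable def ampErr {X Θ : Type*} [MeasurableSpace X] (P : Θ → Measure X)
    (n m : ℕ) : ℝ :=
  ⨅ T : {T : Kernel (Fin n → X) (Fin (n + m) → X) // IsMarkovKernel T},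
    ⨆ θ : Θ, tvDist (Measure.pi fun _ : Fin (n + m) => P θ)
      ((Measure.pi fun _ : Fin n => P θ).bind T.1)

/-- The discrete distribution on `{0, 1, …, d}` with probability vector `p`. -/
noncomputable def discreteMeasure {d : ℕ} (p : Fin (d + 1) → ℝ≥0) :
    Measure (Fin (d + 1)) :=
  ∑ i : Fin (d + 1), (p i : ℝ≥0∞) • Measure.dirac i

/-- The class `𝒫_{d,t}` of discrete distributions `(p_0, …, p_d)` on `{0, …, d}`
with `p_0 = t` known. -/
def discreteClassTop (d : ℕ) (t : ℝ≥0) : Type :=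
  {p : Fin (d + 1) → ℝ≥0 // (∑ i, p i) = 1 ∧ p 0 = t}

theorem discreteMeasure_real_singleton {d : ℕ} (p : Fin (d + 1) → ℝ≥0) (a : Fin (d + 1)) :
    (discreteMeasure p).real {a} = p a := by
  simp [discreteMeasure, Measure.real, Set.indicator_apply]

theorem isProbabilityMeasure_discreteMeasure {d : ℕ} {p : Fin (d + 1) → ℝ≥0}
    (hp : ∑ i, p i = 1) : IsProbabilityMeasure (discreteMeasure p) := by
  constructor
  simp only [discreteMeasure, Measure.coe_finsetSum, Finset.sum_apply, Measure.smul_apply,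
    measure_univ, smul_eq_mul, mul_one]
  exact_mod_cast congrArg ((↑) : ℝ≥0 → ℝ≥0∞) hp

theorem pi_discreteMeasure_real_singleton {d k : ℕ} {p : Fin (d + 1) → ℝ≥0}
    (hp : ∑ i, p i = 1) (x : Fin k → Fin (d + 1)) :
    (Measure.pi fun _ : Fin k => discreteMeasure p).real {x} = ∏ i, (p (x i) : ℝ) := by
  have := isProbabilityMeasure_discreteMeasure hp
  simp_rw [← discreteMeasure_real_singleton p]
  simp [Measure.real, ENNReal.toReal_prod]

theorem bind_real_apply {X Y : Type*} [MeasurableSpace X] [MeasurableSpace Y] [Fintype X]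
    [MeasurableSingletonClass X] (μ : Measure X) [IsFiniteMeasure μ] (κ : Kernel X Y)
    [IsFiniteKernel κ] {A : Set Y} (hA : MeasurableSet A) :
    (μ.bind κ).real A = ∑ x, μ.real {x} * (κ x).real A := by
  rw [Measure.real, Measure.bind_apply hA κ.measurable.aemeasurable, lintegral_fintype,
    ENNReal.toReal_sum fun x _ => ENNReal.mul_ne_top (measure_ne_top _ _) (measure_ne_top _ _)]
  simp [Measure.real, mul_comm]

open Classical in
theorem real_eq_sum_ite {X : Type*} [MeasurableSpace X] [Fintype X]
    [MeasurableSingletonClass X] (μ : Measure X) [IsFiniteMeasure μ] (A : Set X) :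
    μ.real A = ∑ x, μ.real {x} * if x ∈ A then 1 else 0 := by
  simp only [mul_ite, mul_one, mul_zero]
  rw [← Finset.sum_filter, sum_measureReal_singleton]
  simp

section TotalVariation

variable {X : Type*} [MeasurableSpace X] (μ ν : Measure X)
  [IsProbabilityMeasure μ] [IsProbabilityMeasure ν]

theorem abs_toReal_sub_le_one (A : Set X) : |(μ A).toReal - (ν A).toReal| ≤ 1 := by
  change |μ.real A - ν.real A| ≤ 1
  rw [abs_le]
  constructor <;> linarith [measureReal_nonneg (μ := μ) (s := A),
    measureReal_le_one (μ := μ) (s := A), measureReal_nonneg (μ := ν) (s := A),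
    measureReal_le_one (μ := ν) (s := A)]

theorem tvDist_nonneg {X : Type*} [MeasurableSpace X] (μ ν : Measure X) : 0 ≤ tvDist μ ν :=
  Real.iSup_nonneg fun _ => abs_nonneg _

theorem tvDist_le_one : tvDist μ ν ≤ 1 :=
  Real.iSup_le (fun A => abs_toReal_sub_le_one μ ν A) zero_le_one

theorem abs_real_sub_le_tvDist {A : Set X} (hA : MeasurableSet A) :
    |μ.real A - ν.real A| ≤ tvDist μ ν :=
  le_ciSup (f := fun A : {s : Set X // MeasurableSet s} => |(μ A).toReal - (ν A).toReal|)
    ⟨1, by rintro _ ⟨B, rfl⟩; exact abs_toReal_sub_le_one μ ν B⟩ ⟨A, hA⟩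

end TotalVariation

/-- Sums over `n + 1` coordinates, split at the coordinate `j`. -/
theorem sum_pi_succ {α : Type*} [Fintype α] {n : ℕ} (j : Fin (n + 1))
    (F : (Fin (n + 1) → α) → ℝ) :
    ∑ y, F y = ∑ a, ∑ x : Fin n → α, F (j.insertNth a x) := by
  rw [← (Fin.insertNthEquiv (fun _ => α) j).sum_comp, Fintype.sum_prod_type]
  rfl

theorem sum_pi_prod_eq_one {α : Type*} [Fintype α] {q : α → ℝ} (hq : ∑ a, q a = 1) (n : ℕ) :
    ∑ x : Fin n → α, ∏ i, q (x i) = 1 := by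
  rw [← Fintype.piFinset_univ, ← Finset.prod_univ_sum]
  simp [hq]

/-- The variance of a sum of i.i.d. centred variables. -/
theorem sum_pi_prod_mul_sq {α : Type*} [Fintype α] {q h : α → ℝ} (hq : ∑ a, q a = 1)
    (hqh : ∑ a, q a * h a = 0) (n : ℕ) :
    ∑ x : Fin n → α, (∏ i, q (x i)) * (∑ i, h (x i)) ^ 2 = n * ∑ a, q a * h a ^ 2 := by
  induction n with
  | zero => simp
  | succ n ih =>
    rw [sum_pi_succ 0]
    have key : ∀ (a : α) (x : Fin n → α),
        (∏ i, q ((0 : Fin (n + 1)).insertNth (α := fun _ => α) a x i)) *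
          (∑ i, h ((0 : Fin (n + 1)).insertNth (α := fun _ => α) a x i)) ^ 2 =
        (q a * h a ^ 2) * (∏ i, q (x i)) +
          (q a * h a) * (2 * ((∏ i, q (x i)) * ∑ i, h (x i))) +
          q a * ((∏ i, q (x i)) * (∑ i, h (x i)) ^ 2) := by
      intro a x
      simp only [Fin.prod_univ_succ, Fin.sum_univ_succ, Fin.insertNth_zero', Fin.cons_zero,
        Fin.cons_succ]
      ring
    simp_rw [key, Finset.sum_add_distrib, ← Finset.mul_sum, ← Finset.sum_mul, ih, hqh, hq,
      sum_pi_prod_eq_one hq]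
    push_cast
    ring

/-- The amplification procedure that inserts a symbol `0` at a uniformly random position. -/
noncomputable def insertZeroKernel (d n : ℕ) :
    Kernel (Fin n → Fin (d + 1)) (Fin (n + 1) → Fin (d + 1)) where
  toFun x := ∑ j : Fin (n + 1), ((n + 1 : ℕ) : ℝ≥0∞)⁻¹ • Measure.dirac (j.insertNth 0 x)
  measurable' := Measurable.of_discrete

instance (d n : ℕ) : IsMarkovKernel (insertZeroKernel d n) := by
  refine ⟨fun x => ⟨?_⟩⟩
  change (∑ j : Fin (n + 1), ((n + 1 : ℕ) : ℝ≥0∞)⁻¹ •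
    Measure.dirac (j.insertNth (α := fun _ => Fin (d + 1)) 0 x)) Set.univ = 1
  simp only [Measure.coe_finsetSum, Finset.sum_apply, Measure.smul_apply, measure_univ,
    smul_eq_mul, mul_one, Finset.sum_const, Finset.card_univ, Fintype.card_fin, nsmul_eq_mul]
  exact ENNReal.mul_inv_cancel (by simp) (ENNReal.natCast_ne_top _)

open Classical in
theorem insertZeroKernel_real_apply (d n : ℕ) (x : Fin n → Fin (d + 1))
    (A : Set (Fin (n + 1) → Fin (d + 1))) :
    (insertZeroKernel d n x).real A = ((n : ℝ) + 1)⁻¹ *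
      ∑ j : Fin (n + 1), if j.insertNth (α := fun _ => Fin (d + 1)) 0 x ∈ A then 1 else 0 := by
  change ((∑ j : Fin (n + 1), ((n + 1 : ℕ) : ℝ≥0∞)⁻¹ •
    Measure.dirac (j.insertNth (α := fun _ => Fin (d + 1)) 0 x)) A).toReal = _
  simp only [Measure.coe_finsetSum, Finset.sum_apply, Measure.smul_apply, smul_eq_mul,
    ← Finset.mul_sum, ENNReal.toReal_mul, Measure.dirac_apply' _ (Set.toFinite A).measurableSet,
    ENNReal.toReal_inv, ENNReal.toReal_natCast]
  rw [ENNReal.toReal_sum fun j _ => by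
    simp only [Set.indicator_apply]; split_ifs <;> simp]
  push_cast
  congr 1
  refine Finset.sum_congr rfl fun j _ => ?_
  simp only [Set.indicator_apply]
  split_ifs <;> simp

open Classical in
/-- The law of the output of `insertZeroKernel` reweights each word by its normalised number of
zeros. -/
theorem bind_insertZeroKernel_real {d n : ℕ} {p : Fin (d + 1) → ℝ≥0} (hp : ∑ i, p i = 1)
    (h0 : p 0 ≠ 0) (A : Set (Fin (n + 1) → Fin (d + 1))) :
    ((Measure.pi fun _ : Fin n => discreteMeasure p).bind (insertZeroKernel d n)).real A =
      (((n : ℝ) + 1) * p 0)⁻¹ * ∑ y : Fin (n + 1) → Fin (d + 1),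
        (∏ i, (p (y i) : ℝ)) * (if y ∈ A then 1 else 0) * ∑ j, if y j = 0 then 1 else 0 := by
  have := isProbabilityMeasure_discreteMeasure hp
  have h0' : (p 0 : ℝ) ≠ 0 := by exact_mod_cast h0
  rw [bind_real_apply _ _ (Set.toFinite A).measurableSet]
  simp_rw [pi_discreteMeasure_real_singleton hp, insertZeroKernel_real_apply, mul_inv,
    mul_left_comm _ ((n : ℝ) + 1)⁻¹, mul_assoc, ← Finset.mul_sum]
  congr 1
  simp_rw [Finset.mul_sum]
  rw [Finset.sum_comm, Finset.sum_comm (s := (Finset.univ : Finset (Fin (n + 1) → _)))]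
  refine Finset.sum_congr rfl fun j _ => ?_
  refine Eq.symm ((sum_pi_succ j _).trans ?_)
  rw [Finset.sum_eq_single 0 (by
    intro a _ ha
    exact Finset.sum_eq_zero fun x _ => by simp [ha]) (by simp)]
  refine Finset.sum_congr rfl fun x _ => ?_
  simp only [Fin.prod_univ_succAbove _ j, Fin.insertNth_apply_same, Fin.insertNth_apply_succAbove,
    if_true, mul_one]
  field_simp

theorem tvDist_bind_insertZeroKernel_le {d n : ℕ} {p : Fin (d + 1) → ℝ≥0} (hp : ∑ i, p i = 1)
    (h0 : p 0 ≠ 0) :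
    tvDist (Measure.pi fun _ : Fin (n + 1) => discreteMeasure p)
      ((Measure.pi fun _ : Fin n => discreteMeasure p).bind (insertZeroKernel d n)) ≤
        Real.sqrt (((n : ℝ) + 1) * p 0)⁻¹ := by
  classical
  have := isProbabilityMeasure_discreteMeasure hp
  have h0' : (0 : ℝ) < p 0 := by exact_mod_cast pos_iff_ne_zero.2 h0
  have hp' : ∑ i, (p i : ℝ) = 1 := by exact_mod_cast congrArg ((↑) : ℝ≥0 → ℝ) hp
  have hp1 : (p 0 : ℝ) ≤ 1 := by
    rw [← hp']
    exact Finset.single_le_sum (f := fun i => (p i : ℝ)) (fun i _ => (p i).2) (Finset.mem_univ 0)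
  refine Real.iSup_le ?_ (Real.sqrt_nonneg _)
  rintro ⟨A, hA⟩
  refine Real.abs_le_sqrt ?_
  change (Measure.real _ A - Measure.real _ A) ^ 2 ≤ _
  rw [bind_insertZeroKernel_real hp h0, real_eq_sum_ite (Measure.pi _)]
  simp_rw [pi_discreteMeasure_real_singleton hp]
  set N : ℝ := ((n : ℝ) + 1) * p 0 with hN
  have hNpos : 0 < N := by positivity
  set h : Fin (d + 1) → ℝ := fun a => (if a = 0 then 1 else 0) - p 0 with hh
  have hqh : ∑ a, (p a : ℝ) * h a = 0 := by
    simp [hh, mul_sub, ← Finset.sum_mul, hp']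
  have hqh2 : ∑ a, (p a : ℝ) * h a ^ 2 = p 0 * (1 - p 0) := by
    have : ∀ a, (p a : ℝ) * h a ^ 2 =
        (1 - 2 * p 0) * (p a * if a = 0 then 1 else 0) + p 0 ^ 2 * p a := by
      intro a
      simp only [hh]
      split_ifs <;> ring
    simp_rw [this, Finset.sum_add_distrib, ← Finset.mul_sum, hp']
    simp
    ring
  have hvar := sum_pi_prod_mul_sq hp' hqh (n + 1)
  rw [hqh2] at hvar
  have hdiff : ∑ y : Fin (n + 1) → Fin (d + 1),
        (∏ i, (p (y i) : ℝ)) * (if y ∈ A then 1 else 0) -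
      N⁻¹ * ∑ y : Fin (n + 1) → Fin (d + 1),
        (∏ i, (p (y i) : ℝ)) * (if y ∈ A then 1 else 0) * ∑ j, (if y j = 0 then 1 else 0) =
      -N⁻¹ * ∑ y : Fin (n + 1) → Fin (d + 1),
        (∏ i, (p (y i) : ℝ)) * (if y ∈ A then 1 else 0) * ∑ j, h (y j) := by
    have : ∀ y : Fin (n + 1) → Fin (d + 1),
        ∑ j, h (y j) = ∑ j, (if y j = 0 then 1 else 0) - N := by
      intro y
      simp [hh, hN]
    simp_rw [this, mul_sub, Finset.sum_sub_distrib, ← Finset.sum_mul]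
    field_simp
    ring
  rw [hdiff, mul_pow]
  have hcs := Finset.sum_sq_le_sum_mul_sum_of_sq_le_mul
    (Finset.univ : Finset (Fin (n + 1) → Fin (d + 1)))
    (r := fun y => (∏ i, (p (y i) : ℝ)) * (if y ∈ A then 1 else 0) * ∑ j, h (y j))
    (f := fun y => (∏ i, (p (y i) : ℝ)) * (if y ∈ A then 1 else 0))
    (g := fun y => (∏ i, (p (y i) : ℝ)) * (∑ j, h (y j)) ^ 2)
    (fun y _ => mul_nonneg (Finset.prod_nonneg fun i _ => (p (y i)).2) (by positivity))
    (fun y _ => mul_nonneg (Finset.prod_nonneg fun i _ => (p (y i)).2) (sq_nonneg _))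
    (fun y _ => le_of_eq (by split_ifs <;> ring))
  have hA1 : ∑ y : Fin (n + 1) → Fin (d + 1),
      (∏ i, (p (y i) : ℝ)) * (if y ∈ A then 1 else 0) ≤ 1 := by
    refine (Finset.sum_le_sum fun y _ => mul_le_of_le_one_right
      (Finset.prod_nonneg fun i _ => (p (y i)).2) (by split_ifs <;> norm_num)).trans_eq
        (sum_pi_prod_eq_one hp' (n + 1))
  rw [hvar] at hcs
  have hbound : ((n + 1 : ℕ) : ℝ) * (p 0 * (1 - p 0)) ≤ N := by
    push_cast
    rw [hN]
    nlinarith [mul_nonneg (by positivity : (0 : ℝ) ≤ n + 1) (sq_nonneg (p 0 : ℝ))]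
  have hbound0 : 0 ≤ ((n + 1 : ℕ) : ℝ) * (p 0 * (1 - p 0)) :=
    mul_nonneg (by positivity) (mul_nonneg h0'.le (by linarith))
  calc (-N⁻¹) ^ 2 * _ ≤ (-N⁻¹) ^ 2 * N := by
        refine mul_le_mul_of_nonneg_left (hcs.trans ?_) (sq_nonneg _)
        exact (mul_le_of_le_one_left hbound0 hA1).trans hbound
    _ = N⁻¹ := by field_simp

theorem ampErr_le {X Θ : Type*} [MeasurableSpace X] {P : Θ → Measure X} {n m : ℕ} {ε : ℝ}
    (hε : 0 ≤ ε) (T : Kernel (Fin n → X) (Fin (n + m) → X)) [hT : IsMarkovKernel T]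
    (h : ∀ θ, tvDist (Measure.pi fun _ : Fin (n + m) => P θ)
      ((Measure.pi fun _ : Fin n => P θ).bind T) ≤ ε) :
    ampErr P n m ≤ ε := by
  refine le_trans (ciInf_le (f := fun T : {T : Kernel (Fin n → X) (Fin (n + m) → X) //
    IsMarkovKernel T} => ⨆ θ : Θ, tvDist (Measure.pi fun _ : Fin (n + m) => P θ)
      ((Measure.pi fun _ : Fin n => P θ).bind T.1)) ⟨0, ?_⟩ ⟨T, hT⟩) (Real.iSup_le h hε)
  rintro _ ⟨S, rfl⟩
  exact Real.iSup_nonneg fun _ => tvDist_nonneg _ _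

theorem le_ampErr {X Θ : Type*} [MeasurableSpace X] [Nonempty X] {P : Θ → Measure X}
    [∀ θ, IsProbabilityMeasure (P θ)] {n m : ℕ} {ε : ℝ}
    (h : ∀ T : Kernel (Fin n → X) (Fin (n + m) → X), IsMarkovKernel T →
      ∃ θ, ε ≤ tvDist (Measure.pi fun _ : Fin (n + m) => P θ)
        ((Measure.pi fun _ : Fin n => P θ).bind T)) :
    ε ≤ ampErr P n m := by
  have : Nonempty {T : Kernel (Fin n → X) (Fin (n + m) → X) // IsMarkovKernel T} :=
    ⟨⟨Kernel.const _ (Measure.dirac (Classical.arbitrary _)), inferInstance⟩⟩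
  refine le_ciInf fun ⟨T, hT⟩ => ?_
  obtain ⟨θ, hθ⟩ := h T hT
  exact hθ.trans (le_ciSup (f := fun θ => tvDist (Measure.pi fun _ : Fin (n + m) => P θ)
        ((Measure.pi fun _ : Fin n => P θ).bind T))
    ⟨1, by rintro _ ⟨θ, rfl⟩; exact tvDist_le_one _ _⟩ θ)

section Block

variable {m K : ℕ}

/-- The `i`-th nonzero symbol of block `b`. -/
def blockSymbol (b : Fin m) (i : Fin K) : Fin (m * K + 1) :=
  (finProdFinEquiv (b, i)).succ

theorem blockSymbol_inj {b b' : Fin m} {i i' : Fin K} :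
    blockSymbol b i = blockSymbol b' i' ↔ b = b' ∧ i = i' := by
  simp [blockSymbol]

/-- The distribution with mass `t` at `0` that is uniform over one symbol `g b` from each
block `b`. -/
noncomputable def blockDist (t : ℝ≥0) (g : Fin m → Fin K) : Fin (m * K + 1) → ℝ≥0 :=
  Fin.cons t fun j =>
    if g (finProdFinEquiv.symm j).1 = (finProdFinEquiv.symm j).2 then (1 - t) / m else 0

theorem blockDist_zero (t : ℝ≥0) (g : Fin m → Fin K) : blockDist t g 0 = t := rfl

theorem blockDist_blockSymbol (t : ℝ≥0) (g : Fin m → Fin K) (b : Fin m) (i : Fin K) :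
    blockDist t g (blockSymbol b i) = if g b = i then (1 - t) / m else 0 := by
  simp only [blockDist, blockSymbol, Fin.cons_succ, Equiv.symm_apply_apply]

theorem sum_blockDist (hm : 0 < m) {t : ℝ≥0} (ht : t ≤ 1) (g : Fin m → Fin K) :
    ∑ i, blockDist t g i = 1 := by
  have hm' : (m : ℝ≥0) ≠ 0 := by positivity
  have key : ∑ j : Fin (m * K), blockDist t g j.succ = 1 - t := by
    rw [← finProdFinEquiv.sum_comp, Fintype.sum_prod_type]
    have : ∀ b i, blockDist t g (finProdFinEquiv (b, i)).succ =
        if g b = i then (1 - t) / m else 0 := blockDist_blockSymbol t g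
    simp only [this, Finset.sum_ite_eq, Finset.mem_univ, if_true, Finset.sum_const,
      Finset.card_univ, Fintype.card_fin, nsmul_eq_mul]
    field_simp
  rw [Fin.sum_univ_succ, key, blockDist_zero]
  exact add_tsub_cancel_of_le ht

/-- Words with pairwise distinct nonzero symbols, all charged by `blockDist t g`. -/
def transversalWords (k : ℕ) (g : Fin m → Fin K) : Set (Fin k → Fin (m * K + 1)) :=
  Set.range fun (f : Fin k ↪ Fin m) i => blockSymbol (f i) (g (f i))

theorem pi_blockDist_real_transversalWords (hm : 0 < m) {t : ℝ≥0} (ht : t ≤ 1) (k : ℕ)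
    (g : Fin m → Fin K) :
    (Measure.pi fun _ : Fin k => discreteMeasure (blockDist t g)).real (transversalWords k g) =
      m.descFactorial k * ((1 - t) / m) ^ k := by
  classical
  have hs := sum_blockDist hm ht g
  have := isProbabilityMeasure_discreteMeasure hs
  have hinj : Function.Injective
      fun (f : Fin k ↪ Fin m) i => blockSymbol (f i) (g (f i)) := by
    intro f f' h
    ext i : 1
    exact (blockSymbol_inj.1 (congrFun h i)).1
  have hrange : transversalWords k g =
      ((Finset.univ.map ⟨_, hinj⟩ : Finset (Fin k → Fin (m * K + 1))) : Set _) := by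
    ext y
    simp [transversalWords]
  rw [hrange, ← sum_measureReal_singleton, Finset.sum_map]
  simp [pi_discreteMeasure_real_singleton hs, blockDist_blockSymbol, Fintype.card_embedding_eq,
    NNReal.coe_sub ht, div_pow]

open Classical in
/-- Given `n` observed symbols, at most a fraction `1 / K` of the choices `g`, weighted by
likelihood, is compatible with a given word of `n + 1` distinct symbols. -/
theorem sum_blockDist_mul_transversal_le (t : ℝ≥0) {n : ℕ} (x : Fin n → Fin (m * K + 1))
    (y : Fin (n + 1) → Fin (m * K + 1)) :
    K * ∑ g : Fin m → Fin K, (∏ i, (blockDist t g (x i) : ℝ)) *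
        (if y ∈ transversalWords (n + 1) g then 1 else 0) ≤
      ∑ g : Fin m → Fin K, ∏ i, (blockDist t g (x i) : ℝ) := by
  have hw : ∀ g : Fin m → Fin K, 0 ≤ ∏ i, (blockDist t g (x i) : ℝ) :=
    fun g => Finset.prod_nonneg fun i _ => (blockDist t g (x i)).2
  by_cases hy : ∃ g : Fin m → Fin K, y ∈ transversalWords (n + 1) g
  swap
  · push Not at hy
    simp only [hy, if_false, mul_zero, Finset.sum_const_zero]
    exact Finset.sum_nonneg fun g _ => hw g
  obtain ⟨g₀, f₀, hf₀⟩ := hy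
  have hyinj : Function.Injective y := by
    intro k l hkl
    rw [← hf₀] at hkl
    exact f₀.injective (blockSymbol_inj.1 hkl).1
  obtain ⟨k, hk⟩ : ∃ k, ∀ i, x i ≠ y k := by
    by_contra! hcon
    choose φ hφ using hcon
    have hφinj : Function.Injective φ := fun k l hkl => hyinj (by rw [← hφ, ← hφ, hkl])
    simpa using Fintype.card_le_of_injective φ hφinj
  obtain ⟨b, r₀, hb⟩ : ∃ b r₀, y k = blockSymbol b r₀ := ⟨_, _, (congrFun hf₀ k).symm⟩
  have hmem : ∀ g : Fin m → Fin K, y ∈ transversalWords (n + 1) g → g b = r₀ := by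
    rintro g ⟨f, hf⟩
    have h : blockSymbol (f k) (g (f k)) = blockSymbol b r₀ := (congrFun hf k).trans hb
    obtain ⟨h1, h2⟩ := blockSymbol_inj.1 h
    rwa [h1] at h2
  have hle : ∀ r : Fin K, ∑ g : Fin m → Fin K, (∏ i, (blockDist t g (x i) : ℝ)) *
      (if y ∈ transversalWords (n + 1) g then 1 else 0) ≤
        ∑ g : Fin m → Fin K with g b = r, ∏ i, (blockDist t g (x i) : ℝ) := by
    intro r
    have hupd : ∀ g : Fin m → Fin K, g b = r₀ → ∏ i, (blockDist t g (x i) : ℝ) ≤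
        ∏ i, (blockDist t (Function.update g b r) (x i) : ℝ) := by
      intro g hg
      refine Finset.prod_le_prod (fun i _ => (blockDist t g (x i)).2) fun i _ => ?_
      rw [NNReal.coe_le_coe]
      rcases Fin.eq_zero_or_eq_succ (x i) with h | ⟨j, h⟩
      · simp [h, blockDist_zero]
      obtain ⟨⟨b', i'⟩, rfl⟩ := finProdFinEquiv.surjective j
      change x i = blockSymbol b' i' at h
      rw [h, blockDist_blockSymbol, blockDist_blockSymbol]
      by_cases hbb : b' = b
      · subst hbb
        have : g b' ≠ i' := by
          rintro rfl
          exact hk i (by rw [h, hb, hg])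
        simp [this]
      · simp [Function.update_of_ne hbb]
    calc _ ≤ ∑ g : Fin m → Fin K with g b = r₀, ∏ i, (blockDist t g (x i) : ℝ) := by
          rw [Finset.sum_filter]
          refine Finset.sum_le_sum fun g _ => ?_
          by_cases h : y ∈ transversalWords (n + 1) g
          · simp [h, hmem g h]
          · simp only [h, if_false, mul_zero]
            split_ifs
            exacts [hw g, le_rfl]
      _ ≤ ∑ g : Fin m → Fin K with g b = r₀,
            ∏ i, (blockDist t (Function.update g b r) (x i) : ℝ) :=
          Finset.sum_le_sum fun g hg => hupd g (Finset.mem_filter.1 hg).2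
      _ = ∑ g ∈ ({g : Fin m → Fin K | g b = r₀} : Finset _).image (Function.update · b r),
            ∏ i, (blockDist t g (x i) : ℝ) := by
          rw [Finset.sum_image]
          intro g hg g' hg' h
          simp only [Finset.coe_filter, Finset.mem_univ, true_and, Set.mem_ofPred_eq] at hg hg'
          ext1 b'
          by_cases hbb : b' = b
          · rw [hbb, hg, hg']
          · simpa [Function.update_of_ne hbb] using congrFun h b'
      _ ≤ _ := by
          refine Finset.sum_le_sum_of_subset_of_nonneg ?_ fun g _ _ => hw g
          intro g hg
          obtain ⟨g', -, rfl⟩ := Finset.mem_image.1 hg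
          simp
  calc _ = ∑ r : Fin K, ∑ g : Fin m → Fin K, (∏ i, (blockDist t g (x i) : ℝ)) *
          (if y ∈ transversalWords (n + 1) g then 1 else 0) := by simp
    _ ≤ ∑ r : Fin K, ∑ g : Fin m → Fin K with g b = r, ∏ i, (blockDist t g (x i) : ℝ) :=
        Finset.sum_le_sum fun r _ => hle r
    _ = _ := Finset.sum_fiberwise _ (fun g : Fin m → Fin K => g b) _

/-- No procedure outputs `n + 1` distinct nonzero symbols of the hidden support, from `n` samples,
with probability above `1 / K` for every support. -/
theorem exists_bind_real_transversalWords_le (hm : 0 < m) (hK : 0 < K) {t : ℝ≥0} (ht : t ≤ 1)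
    {n : ℕ} (T : Kernel (Fin n → Fin (m * K + 1)) (Fin (n + 1) → Fin (m * K + 1)))
    [IsMarkovKernel T] :
    ∃ g : Fin m → Fin K, ((Measure.pi fun _ : Fin n => discreteMeasure (blockDist t g)).bind
      T).real (transversalWords (n + 1) g) ≤ (K : ℝ)⁻¹ := by
  classical
  have : Nonempty (Fin K) := ⟨⟨0, hK⟩⟩
  have hprob (g : Fin m → Fin K) := isProbabilityMeasure_discreteMeasure (sum_blockDist hm ht g)
  have hK' : (0 : ℝ) < K := by exact_mod_cast hK
  suffices h : ∑ g : Fin m → Fin K, ((Measure.pi fun _ : Fin n =>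
      discreteMeasure (blockDist t g)).bind T).real (transversalWords (n + 1) g) ≤
        ∑ g : Fin m → Fin K, (K : ℝ)⁻¹ by
    obtain ⟨g, -, hg⟩ := Finset.exists_le_of_sum_le Finset.univ_nonempty h
    exact ⟨g, hg⟩
  calc _ = ∑ x, ∑ y, (T x).real {y} * ∑ g : Fin m → Fin K, (∏ i, (blockDist t g (x i) : ℝ)) *
        (if y ∈ transversalWords (n + 1) g then 1 else 0) := by
        simp_rw [bind_real_apply _ T (Set.toFinite _).measurableSet,
          pi_discreteMeasure_real_singleton (sum_blockDist hm ht _)]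
        rw [Finset.sum_comm]
        refine Finset.sum_congr rfl fun x _ => ?_
        simp_rw [real_eq_sum_ite (T x) (transversalWords _ _), Finset.mul_sum]
        rw [Finset.sum_comm]
        exact Finset.sum_congr rfl fun y _ => Finset.sum_congr rfl fun g _ => by ring
    _ ≤ ∑ x, ∑ y, (T x).real {y} *
          ((K : ℝ)⁻¹ * ∑ g : Fin m → Fin K, ∏ i, (blockDist t g (x i) : ℝ)) := by
        refine Finset.sum_le_sum fun x _ => Finset.sum_le_sum fun y _ =>
          mul_le_mul_of_nonneg_left ?_ measureReal_nonneg
        rw [le_inv_mul_iff₀ hK']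
        exact sum_blockDist_mul_transversal_le t x y
    _ = _ := by
        simp_rw [← Finset.sum_mul, sum_measureReal_singleton, Finset.coe_univ, probReal_univ,
          one_mul]
        rw [← Finset.mul_sum, Finset.sum_comm]
        have hsum (g : Fin m → Fin K) := sum_pi_prod_eq_one
          (q := fun a => (blockDist t g a : ℝ)) (by exact_mod_cast sum_blockDist hm ht g) n
        simp only [hsum, Finset.sum_const, nsmul_eq_mul]
        ring

theorem le_pi_blockDist_real_transversalWords (hm : 0 < m) {t : ℝ≥0} (ht : t ≤ 1) {n : ℕ}
    (hn : n ≤ m) (g : Fin m → Fin K) :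
    1 - (n + 1) * (t + n / m) ≤ (Measure.pi fun _ : Fin (n + 1) =>
      discreteMeasure (blockDist t g)).real (transversalWords (n + 1) g) := by
  have hm' : (0 : ℝ) < m := by exact_mod_cast hm
  have ht' : (t : ℝ) ≤ 1 := by exact_mod_cast ht
  have hn' : (n : ℝ) / m ≤ 1 := (div_le_one hm').2 (by exact_mod_cast hn)
  have hdesc : ((m : ℝ) - n) ^ (n + 1) ≤ m.descFactorial (n + 1) := by
    have h := Nat.pow_sub_le_descFactorial m (n + 1)
    rw [Nat.add_sub_add_right] at h
    rw [← Nat.cast_sub hn]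
    exact_mod_cast h
  rw [pi_blockDist_real_transversalWords hm ht]
  have hn0 : (0 : ℝ) ≤ n / m := by positivity
  have hmul : (t : ℝ) * (n / m) ≥ 0 := by positivity
  have hbern := one_add_mul_le_pow (a := (1 - (t : ℝ)) * (1 - n / m) - 1)
    (by nlinarith [mul_nonneg (sub_nonneg.2 ht') (sub_nonneg.2 hn')]) (n + 1)
  calc _ ≤ 1 + ((n + 1 : ℕ) : ℝ) * ((1 - (t : ℝ)) * (1 - n / m) - 1) := by
        push_cast
        nlinarith [mul_nonneg (by positivity : (0 : ℝ) ≤ n + 1) hmul]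
    _ ≤ _ := hbern
    _ = ((m : ℝ) - n) ^ (n + 1) * ((1 - t) / m) ^ (n + 1) := by
        rw [← mul_pow]
        congr 1
        field_simp
        ring
    _ ≤ _ := mul_le_mul_of_nonneg_right hdesc
        (pow_nonneg (div_nonneg (by linarith) hm'.le) _)

end Block

theorem discreteClassTop_ampErr_le {d n : ℕ} {t : ℝ≥0} (ht : 0 < t)
    (hn : 100 / (t : ℝ) ≤ n) :
    ampErr (fun p : discreteClassTop d t => discreteMeasure p.1) n 1 ≤ 0.1 := by
  have ht' : (0 : ℝ) < t := by exact_mod_cast ht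
  refine ampErr_le (by norm_num) (insertZeroKernel d n) fun ⟨p, hp, hp0⟩ => ?_
  refine (tvDist_bind_insertZeroKernel_le hp (hp0 ▸ ht.ne')).trans (Real.sqrt_le_iff.2 ?_)
  refine ⟨by norm_num, ?_⟩
  rw [hp0]
  rw [div_le_iff₀ ht'] at hn
  calc (((n : ℝ) + 1) * t)⁻¹ ≤ (100 : ℝ)⁻¹ := by gcongr; nlinarith
    _ = _ := by norm_num

theorem half_le_discreteClassTop_ampErr {m n : ℕ} {t : ℝ≥0} (hm : 0 < m) (ht : t ≤ 1)
    (hn : n ≤ m) (hsmall : ((n : ℝ) + 1) * (t + n / m) ≤ 0.49) :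
    1 / 2 ≤ ampErr (fun p : discreteClassTop (m * 100) t => discreteMeasure p.1) n 1 := by
  have hprob (p : discreteClassTop (m * 100) t) : IsProbabilityMeasure (discreteMeasure p.1) :=
    isProbabilityMeasure_discreteMeasure p.2.1
  refine le_ampErr fun T hT => ?_
  obtain ⟨g, hg⟩ := exists_bind_real_transversalWords_le hm (by norm_num : 0 < 100) ht T
  have hprobg := isProbabilityMeasure_discreteMeasure (sum_blockDist hm ht g)
  refine ⟨⟨blockDist t g, sum_blockDist hm ht g, blockDist_zero t g⟩, ?_⟩
  have htrue := le_pi_blockDist_real_transversalWords hm ht hn g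
  refine le_trans ?_ (abs_real_sub_le_tvDist _ _ (A := transversalWords (n + 1) g)
    (Set.toFinite _).measurableSet)
  refine le_trans ?_ (le_abs_self _)
  norm_num at hg hsmall ⊢
  linarith

/-- Sample amplification with a known heavy symbol.
There are absolute constants `c, C > 0` such that for all `d` divisible by `100`,
all `t ∈ [1/(2√d), 1/2]` and all `n ≥ 1`:
(i) if `n ≥ C/t` then `ε*(𝒫_{d,t}, n, 1) ≤ 0.1`, and
(ii) if `n ≤ c/t` then `ε*(𝒫_{d,t}, n, 1) ≥ 1/2`.
In particular an `(n, n+1)` amplification with error `0.1` is possible iff `n = Θ(1/t)`. -/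
theorem discreteClassTop_amplification_complexity :
    ∃ c C : ℝ, 0 < c ∧ 0 < C ∧
      ∀ (d : ℕ) (t : ℝ≥0) (n : ℕ), 100 ∣ d → 1 ≤ d → 1 ≤ n →
        1 / (2 * Real.sqrt d) ≤ (t : ℝ) → (t : ℝ) ≤ 1 / 2 →
        ((C / (t : ℝ) ≤ (n : ℝ) →
            ampErr (fun p : discreteClassTop d t => discreteMeasure p.1) n 1 ≤ 0.1) ∧
          ((n : ℝ) ≤ c / (t : ℝ) →
            1 / 2 ≤ ampErr (fun p : discreteClassTop d t => discreteMeasure p.1) n 1)) := by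
 
  refine ⟨1 / 100, 100, by norm_num, by norm_num, ?_⟩
  intro d t n hd hd1 hn1 htd ht
  have hd0 : (0 : ℝ) < d := by exact_mod_cast hd1
  have hsqrt : 0 < Real.sqrt d := Real.sqrt_pos.2 hd0
  have ht0 : (0 : ℝ) < t := lt_of_lt_of_le (by positivity) htd
  have ht1 : t ≤ 1 := by
    have : (t : ℝ) ≤ 1 := by linarith
    exact_mod_cast this
  refine ⟨discreteClassTop_ampErr_le (by exact_mod_cast ht0), fun hn => ?_⟩
  obtain ⟨m, rfl⟩ := hd
  rw [mul_comm 100 m] at *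
  have hm : 0 < m := by omega
  have hm' : (0 : ℝ) < m := by exact_mod_cast hm
  have hn1' : (1 : ℝ) ≤ n := by exact_mod_cast hn1
  rw [le_div_iff₀ ht0] at hn
  rw [div_le_iff₀ (by positivity)] at htd
  have hnsqrt : (n : ℝ) ≤ 1 / 50 * Real.sqrt ((m * 100 : ℕ) : ℝ) := by
    nlinarith [mul_le_mul_of_nonneg_right hn hsqrt.le]
  have hnm : (n : ℝ) ^ 2 ≤ 0.04 * m := by
    have hsq := Real.sq_sqrt hd0.le
    push_cast at hsq hnsqrt
    nlinarith
  have hnm' : (n : ℝ) * (n / m) ≤ 0.04 := by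
    rw [← mul_div_assoc, div_le_iff₀ hm']
    linarith
  refine half_le_discreteClassTop_ampErr hm ht1 ?_ ?_
  · have : (n : ℝ) ≤ m := by nlinarith
    exact_mod_cast this
  · have h0 : (0 : ℝ) ≤ n / m := by positivity
    have h1 : (n / m : ℝ) ≤ n * (n / m) := le_mul_of_one_le_left h0 hn1'
    have h2 : (t : ℝ) ≤ n * t := le_mul_of_one_le_left ht0.le hn1'
    norm_num at *
    linarith
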